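/- The address-update map preserves distinctness of addresses (implicit in iterating the Lemma to prove the Proposition): For all addresses t, t', p : List ℕ and every foot address f : List ℕ, if t ≠ t' then update t f p ≠ update t' f p; that is, for fixed f and p, the function s ↦ update s f p is injective. -/

import Mathlib

/-- Adjunction of an auxiliary tree `A` with foot address `f` at address `t` in tree `E`. -/
def adjoin {σ : Type*} (E A : List ℕ → Option σ) (t f : List ℕ) : List ℕ → Option σ :=
  fun r =>
    if t <+: r then
      let u := r.drop t.length
      if f <+: u then E (t ++ u.drop f.length) else A u
    else E r

/-- Address update after adjunction of a tree with foot `f` at address `t`. -/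
def update (s f t : List ℕ) : List ℕ :=
  if t <+: s ∧ t ≠ s then t ++ f ++ s.drop t.length else s

/- `update · f t` fixes every address that does not lie properly below `t`, and inserts `f` right
after `t` in every address that does. The image of an address `t ++ u` with `u ≠ []` is again
properly below `t`, so the two kinds of addresses never share an image; on the addresses below `t`
the map is injective by cancelling `t` and `f`. -/

/-- `p` is a proper prefix of `q`: as tree addresses, the node `q` lies strictly below the node `p`.
It is literally the condition tested by `update`. -/
def ProperPrefix {α : Type*} (p q : List α) : Prop :=
  p <+: q ∧ p ≠ q

theorem properPrefix_append_iff {α : Type*} {p u : List α} : ProperPrefix p (p ++ u) ↔ u ≠ [] := by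
  simp [ProperPrefix]

theorem ProperPrefix.exists_append_eq {α : Type*} {p q : List α} (h : ProperPrefix p q) :
    ∃ u, u ≠ [] ∧ p ++ u = q := by
  obtain ⟨u, rfl⟩ := h.1
  exact ⟨u, properPrefix_append_iff.mp h, rfl⟩

section Update

variable {s f t : List ℕ}

theorem update_of_not_properPrefix (h : ¬ ProperPrefix t s) : update s f t = s :=
  if_neg h

theorem update_append {u : List ℕ} (hu : u ≠ []) : update (t ++ u) f t = t ++ (f ++ u) := by
  have hcond : t <+: t ++ u ∧ t ≠ t ++ u := properPrefix_append_iff.mpr hu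
  rw [update, if_pos hcond, List.drop_left, List.append_assoc]

theorem properPrefix_update_iff : ProperPrefix t (update s f t) ↔ ProperPrefix t s := by
  by_cases h : ProperPrefix t s
  · obtain ⟨u, hu, rfl⟩ := h.exists_append_eq
    rw [update_append hu, properPrefix_append_iff, properPrefix_append_iff]
    exact iff_of_true (List.append_ne_nil_of_right_ne_nil f hu) hu
  · rw [update_of_not_properPrefix h]

end Update

/-- The address-update map preserves distinctness of addresses. -/
theorem update_injective (t t' p f : List ℕ) (h : t ≠ t') :
    update t f p ≠ update t' f p := by
  contrapose! h
  have below_iff : ProperPrefix p t ↔ ProperPrefix p t' := by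
    rw [← properPrefix_update_iff (f := f), h, properPrefix_update_iff]
  by_cases ht : ProperPrefix p t
  · obtain ⟨v, hv, rfl⟩ := (below_iff.mp ht).exists_append_eq
    obtain ⟨u, hu, rfl⟩ := ht.exists_append_eq
    rw [update_append hu, update_append hv] at h
    rw [List.append_cancel_left (List.append_cancel_left h)]
  · have ht' : ¬ ProperPrefix p t' := mt below_iff.mpr ht
    rwa [update_of_not_properPrefix ht, update_of_not_properPrefix ht'] at h
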